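/- Let 𝚫 ∈ 𝒜. Then every 3-cycle (α₀,α₁,α₂) in Δ satisfies (α₀,α₁), (α₁,α₂), (α₂,α₀) ∈ R, i.e. {α₀,α₁,α₂} is a triangle of 𝚫; consequently the assignment sending a triangle {α, Ψα, Ψ²α} to the 3-cycle (α, Ψα, Ψ²α) is a bijection between the set of triangles of 𝚫 and the set of 3-cycles of Δ (up to cyclic permutation). -/

import Mathlib

/-! Common formalization infrastructure for gentle quivers (Bobinski–Buan,
    "Derived equivalence classification of gentle cluster tilted algebras"). -/

/-- A (finite) quiver with (length-two, monomial) relations.  Vertices and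
arrows are natural numbers; `V` and `A` are the finite sets of vertices and
arrows, `src`/`tgt` give the start and terminus of each arrow, and `rel` is the
set of relations, a relation `(a, b)` standing for the length-two path
`a·b` (so `src a = tgt b`). -/
structure QuivRel where
  V : Finset ℕ
  A : Finset ℕ
  src : ℕ → ℕ
  tgt : ℕ → ℕ
  rel : Finset (ℕ × ℕ)

namespace GentleQuiv

/-- Two vertices are adjacent if some arrow joins them (in either direction). -/
def Adj (Q : QuivRel) (x y : ℕ) : Prop :=
  ∃ a ∈ Q.A, (Q.src a = x ∧ Q.tgt a = y) ∨ (Q.src a = y ∧ Q.tgt a = x)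

/-- A quiver is connected if any two of its vertices are joined by a walk. -/
def Connected (Q : QuivRel) : Prop :=
  ∀ x ∈ Q.V, ∀ y ∈ Q.V, Relation.ReflTransGen (Adj Q) x y

/-- `l = [α₁, …, αₙ]` is a (nonempty) path in the quiver: consecutive arrows
compose, i.e. `s αᵢ = t αᵢ₊₁`. -/
def IsPathList (Q : QuivRel) (l : List ℕ) : Prop :=
  l ≠ [] ∧ (∀ a ∈ l, a ∈ Q.A) ∧ l.Chain' (fun a b => Q.src a = Q.tgt b)

/-- The path `l` contains a subpath (two consecutive arrows) lying in `R`. -/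
def HasRelSubpath (Q : QuivRel) (l : List ℕ) : Prop :=
  ∃ a b, (a, b) ∈ Q.rel ∧ [a, b] <:+: l

/-- Gentle quiver: connected, relations are composable pairs of arrows, at most
two arrows in/out of every vertex, the usual gentleness conditions on
relations, and a global bound forcing finite dimensionality. -/
def IsGentle (Q : QuivRel) : Prop :=
  Q.V.Nonempty ∧
  (∀ a ∈ Q.A, Q.src a ∈ Q.V ∧ Q.tgt a ∈ Q.V) ∧
  Connected Q ∧
  (∀ ρ ∈ Q.rel, ρ.1 ∈ Q.A ∧ ρ.2 ∈ Q.A ∧ Q.src ρ.1 = Q.tgt ρ.2) ∧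
  (∀ x, (Q.A.filter fun a => Q.src a = x).card ≤ 2) ∧
  (∀ x, (Q.A.filter fun a => Q.tgt a = x).card ≤ 2) ∧
  (∀ a ∈ Q.A, (Q.A.filter fun b => Q.src b = Q.tgt a ∧ (b, a) ∉ Q.rel).card ≤ 1) ∧
  (∀ a ∈ Q.A, (Q.A.filter fun c => Q.tgt c = Q.src a ∧ (a, c) ∉ Q.rel).card ≤ 1) ∧
  (∀ a ∈ Q.A, (Q.A.filter fun b => (b, a) ∈ Q.rel).card ≤ 1) ∧
  (∀ a ∈ Q.A, (Q.A.filter fun c => (a, c) ∈ Q.rel).card ≤ 1) ∧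
  (∃ n : ℕ, ∀ l : List ℕ, IsPathList Q l → l.length = n → HasRelSubpath Q l)

/-- A choice of functions `σ, τ : Δ₁ → {±1}` as in Avella-Alaminos–Geiss. -/
structure SigmaTau (Q : QuivRel) where
  σ : ℕ → ℤ
  τ : ℕ → ℤ
  σ_pm : ∀ a ∈ Q.A, σ a = 1 ∨ σ a = -1
  τ_pm : ∀ a ∈ Q.A, τ a = 1 ∨ τ a = -1
  σ_src : ∀ a ∈ Q.A, ∀ b ∈ Q.A, a ≠ b → Q.src a = Q.src b → σ a = -σ b
  τ_tgt : ∀ a ∈ Q.A, ∀ b ∈ Q.A, a ≠ b → Q.tgt a = Q.tgt b → τ a = -τ b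
  rel_iff : ∀ a ∈ Q.A, ∀ b ∈ Q.A, Q.src a = Q.tgt b → ((a, b) ∈ Q.rel ↔ σ a = τ b)

/-- A thread: either a trivial path/antipath `1_{x,ε}` at a vertex `x` with a
sign `ε`, or a sequence of arrows of positive length. -/
inductive Thread where
  | triv (x : ℕ) (ε : ℤ) : Thread
  | arrows (l : List ℕ) : Thread
deriving DecidableEq

/-- Source of a thread. -/
def Thread.source (Q : QuivRel) : Thread → ℕ
  | .triv x _ => x
  | .arrows l => Q.src l.getLast!

/-- Target of a thread. -/
def Thread.target (Q : QuivRel) : Thread → ℕ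
  | .triv x _ => x
  | .arrows l => Q.tgt l.head!

/-- `σω` (for paths and antipaths alike; `σ 1_{x,ε} = ε = σ 1'_{x,ε}`). -/
def Thread.sigma {Q : QuivRel} (st : SigmaTau Q) : Thread → ℤ
  | .triv _ ε => ε
  | .arrows l => st.σ l.getLast!

/-- `τω` when `ω` is regarded as a path (`τ 1_{x,ε} = -ε`). -/
def Thread.tauPath {Q : QuivRel} (st : SigmaTau Q) : Thread → ℤ
  | .triv _ ε => -ε
  | .arrows l => st.τ l.head!

/-- `τω` when `ω` is regarded as an antipath (`τ 1'_{x,ε} = ε`). -/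
def Thread.tauAnti {Q : QuivRel} (st : SigmaTau Q) : Thread → ℤ
  | .triv _ ε => ε
  | .arrows l => st.τ l.head!

/-- Length of a thread. -/
def Thread.len : Thread → ℕ
  | .triv _ _ => 0
  | .arrows l => l.length

/-- A path in `𝚫` of positive length (no two consecutive arrows in `R`). -/
def IsPermList (Q : QuivRel) (l : List ℕ) : Prop :=
  IsPathList Q l ∧ l.Chain' (fun a b => (a, b) ∉ Q.rel)

/-- An antipath in `𝚫` of positive length (all consecutive pairs in `R`). -/
def IsAntiList (Q : QuivRel) (l : List ℕ) : Prop :=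
  l ≠ [] ∧ (∀ a ∈ l, a ∈ Q.A) ∧ l.Chain' (fun a b => (a, b) ∈ Q.rel)

/-- A thread is a path in `𝚫` (including trivial ones). -/
def IsPathThread (Q : QuivRel) : Thread → Prop
  | .triv x ε => x ∈ Q.V ∧ (ε = 1 ∨ ε = -1)
  | .arrows l => IsPermList Q l

/-- A thread is an antipath in `𝚫` (including trivial ones). -/
def IsAntiThread (Q : QuivRel) : Thread → Prop
  | .triv x ε => x ∈ Q.V ∧ (ε = 1 ∨ ε = -1)
  | .arrows l => IsAntiList Q l

/-- `w ∈ ℳ`: `w` is a maximal path of `𝚫`. -/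
def InM (Q : QuivRel) (st : SigmaTau Q) (w : Thread) : Prop :=
  IsPathThread Q w ∧
  (¬ ∃ a ∈ Q.A, Q.src a = w.target Q ∧ st.σ a = -(w.tauPath st)) ∧
  (¬ ∃ b ∈ Q.A, Q.tgt b = w.source Q ∧ st.τ b = -(w.sigma st))

/-- `w ∈ 𝒩`: `w` is a maximal antipath of `𝚫`. -/
def InN (Q : QuivRel) (st : SigmaTau Q) (w : Thread) : Prop :=
  IsAntiThread Q w ∧
  (¬ ∃ a ∈ Q.A, Q.src a = w.target Q ∧ st.σ a = w.tauAnti st) ∧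
  (¬ ∃ b ∈ Q.A, Q.tgt b = w.source Q ∧ st.τ b = w.sigma st)

/-- The graph of the bijection `Φ = φ ∘ ψ : 𝒩 → 𝒩`:  `PhiRel Q st w w'` holds
iff `w, w' ∈ 𝒩` and the maximal path `ψ w` (with `s(ψw) = sw`, `σ(ψw) = -σw`)
satisfies `t w' = t (ψ w)` and `τ w' = -τ(ψ w)`, i.e. `w' = φ (ψ w) = Φ w`. -/
def PhiRel (Q : QuivRel) (st : SigmaTau Q) (w w' : Thread) : Prop :=
  InN Q st w ∧ InN Q st w' ∧
  ∃ m : Thread, InM Q st m ∧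
    m.source Q = w.source Q ∧ m.sigma st = -(w.sigma st) ∧
    w'.target Q = m.target Q ∧ w'.tauAnti st = -(m.tauPath st)

/-- `O` is an orbit of the `ℤ`-action on `𝒩` induced by `Φ`. -/
def NOrbit (Q : QuivRel) (st : SigmaTau Q) (O : Set Thread) : Prop :=
  ∃ w, InN Q st w ∧ O = {w' | Relation.EqvGen (PhiRel Q st) w w'}

/-- `p(𝒪) = |𝒪|` for an orbit `𝒪 ∈ 𝒩/ℤ`. -/
noncomputable def pN (O : Set Thread) : ℕ := O.ncard

/-- `q(𝒪) = Σ_{ω ∈ 𝒪} ℓ(ω)` for an orbit `𝒪 ∈ 𝒩/ℤ`. -/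
noncomputable def qN (O : Set Thread) : ℕ := ∑ᶠ w ∈ O, Thread.len w

/-- `a ∈ 𝒞`: the arrow `a` occurs in no maximal antipath. -/
def InC (Q : QuivRel) (st : SigmaTau Q) (a : ℕ) : Prop :=
  a ∈ Q.A ∧ ¬ ∃ l : List ℕ, InN Q st (.arrows l) ∧ a ∈ l

/-- The graph of the bijection `Ψ : 𝒞 → 𝒞`. -/
def PsiRel (Q : QuivRel) (st : SigmaTau Q) (a b : ℕ) : Prop :=
  InC Q st a ∧ InC Q st b ∧ Q.tgt b = Q.src a ∧ st.τ b = st.σ a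

/-- `O` is an orbit of the `ℤ`-action on `𝒞` induced by `Ψ`. -/
def COrbit (Q : QuivRel) (st : SigmaTau Q) (O : Set ℕ) : Prop :=
  ∃ a, InC Q st a ∧ O = {b | Relation.EqvGen (PsiRel Q st) a b}

/-- The Avella-Alaminos–Geiss invariant `f_𝚫 : ℕ² → ℕ`:  `f_𝚫 (p,q)` counts the
orbits `𝒪 ∈ 𝒩/ℤ ⊔ 𝒞/ℤ` with `p(𝒪) = p` and `q(𝒪) = q`. -/
noncomputable def fInv (Q : QuivRel) (st : SigmaTau Q) : ℕ × ℕ → ℕ := fun pq =>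
  {O : Set Thread | NOrbit Q st O ∧ pN O = pq.1 ∧ qN O = pq.2}.ncard +
  {O : Set ℕ | COrbit Q st O ∧ pq.1 = 0 ∧ O.ncard = pq.2}.ncard

/-- `[p, q] : ℕ² → ℕ`, the characteristic function of `{(p, q)}`. -/
def charFn (p q : ℕ) : ℕ × ℕ → ℕ := fun pq => if pq = (p, q) then 1 else 0

/-- Tree type: `|Δ₀| = |Δ₁| + 1`. -/
def TreeType (Q : QuivRel) : Prop := Q.V.card = Q.A.card + 1

/-- Removing a set of arrows (keeping all vertices); relations containing a
removed arrow are discarded. -/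
def deleteArrows (Q : QuivRel) (S : Finset ℕ) : QuivRel where
  V := Q.V
  A := Q.A \ S
  src := Q.src
  tgt := Q.tgt
  rel := Q.rel.filter fun ρ => ρ.1 ∉ S ∧ ρ.2 ∉ S

/-- Branch arrow: removing it disconnects the quiver. -/
def BranchArrow (Q : QuivRel) (a : ℕ) : Prop :=
  a ∈ Q.A ∧ ¬ Connected (deleteArrows Q {a})

/-- Cycle arrow: removing it leaves the quiver connected. -/
def CycleArrow (Q : QuivRel) (a : ℕ) : Prop :=
  a ∈ Q.A ∧ Connected (deleteArrows Q {a})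

/-- Branch relation: a relation one of whose arrows is a branch arrow. -/
def BranchRel (Q : QuivRel) (ρ : ℕ × ℕ) : Prop :=
  ρ ∈ Q.rel ∧ (BranchArrow Q ρ.1 ∨ BranchArrow Q ρ.2)

/-- A relation `ρ = (α, β)` is isolated if the antipath `(α, β)` is a maximal
antipath, i.e. `ρ ∈ 𝒩`. -/
def Isolated (Q : QuivRel) (st : SigmaTau Q) (ρ : ℕ × ℕ) : Prop :=
  ρ ∈ Q.rel ∧ InN Q st (.arrows [ρ.1, ρ.2])

/-- `Q'` is obtained from `Q` by completing the relations from `R₀`, the new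
arrow attached to `ρ ∈ R₀` being `γ ρ`. -/
structure IsCompletion (Q : QuivRel) (R0 : Finset (ℕ × ℕ)) (γ : ℕ × ℕ → ℕ)
    (Q' : QuivRel) : Prop where
  subset : R0 ⊆ Q.rel
  fresh : ∀ ρ ∈ R0, γ ρ ∉ Q.A
  inj : ∀ ρ ∈ R0, ∀ ρ' ∈ R0, γ ρ = γ ρ' → ρ = ρ'
  V_eq : Q'.V = Q.V
  A_eq : Q'.A = Q.A ∪ R0.image γ
  src_old : ∀ a ∈ Q.A, Q'.src a = Q.src a
  tgt_old : ∀ a ∈ Q.A, Q'.tgt a = Q.tgt a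
  src_new : ∀ ρ ∈ R0, Q'.src (γ ρ) = Q.tgt ρ.1
  tgt_new : ∀ ρ ∈ R0, Q'.tgt (γ ρ) = Q.src ρ.2
  rel_eq : Q'.rel = Q.rel ∪ R0.image (fun ρ => (γ ρ, ρ.1)) ∪
      R0.image (fun ρ => (ρ.2, γ ρ))

/-- A 3-cycle: three pairwise distinct arrows forming an oriented cycle. -/
def Is3Cycle (Q : QuivRel) (a0 a1 a2 : ℕ) : Prop :=
  a0 ∈ Q.A ∧ a1 ∈ Q.A ∧ a2 ∈ Q.A ∧ a0 ≠ a1 ∧ a1 ≠ a2 ∧ a0 ≠ a2 ∧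
  Q.src a0 = Q.tgt a1 ∧ Q.src a1 = Q.tgt a2 ∧ Q.src a2 = Q.tgt a0

/-- A triangle: a 3-cycle all of whose three compositions are relations. -/
def IsTriangleTriple (Q : QuivRel) (a0 a1 a2 : ℕ) : Prop :=
  Is3Cycle Q a0 a1 a2 ∧ (a0, a1) ∈ Q.rel ∧ (a1, a2) ∈ Q.rel ∧ (a2, a0) ∈ Q.rel

/-- The (unordered) set of arrows of a triangle. -/
def TriangleSet (Q : QuivRel) (O : Finset ℕ) : Prop :=
  ∃ a0 a1 a2, O = {a0, a1, a2} ∧ IsTriangleTriple Q a0 a1 a2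

/-- Branch triangle: removing any two of its arrows disconnects the quiver. -/
def BranchTriangle (Q : QuivRel) (O : Finset ℕ) : Prop :=
  TriangleSet Q O ∧ ∀ S ⊆ O, S.card = 2 → ¬ Connected (deleteArrows Q S)

/-- Free relation: a relation neither of whose arrows lies in `𝒞`. -/
def FreeRel (Q : QuivRel) (st : SigmaTau Q) (ρ : ℕ × ℕ) : Prop :=
  ρ ∈ Q.rel ∧ ¬ InC Q st ρ.1 ∧ ¬ InC Q st ρ.2

/-- The class `𝒜`: gentle quivers with `f_𝚫 = m·[0,3] + [p+m+2, p]`. -/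
def ClassA (Q : QuivRel) (st : SigmaTau Q) : Prop :=
  IsGentle Q ∧ ∃ m p : ℕ, ∀ x, fInv Q st x = m * charFn 0 3 x + charFn (p + m + 2) p x

/-- The class `Ã`: gentle quivers with
`f_𝚫 = (m₁+m₂)·[0,3] + [p+m₁, p] + [q+m₂, q]`, `p+m₁ > 0`, `q+m₂ > 0`. -/
def ClassAtilde (Q : QuivRel) (st : SigmaTau Q) : Prop :=
  IsGentle Q ∧ ∃ m1 m2 p q : ℕ, 0 < p + m1 ∧ 0 < q + m2 ∧
    ∀ x, fInv Q st x =
      (m1 + m2) * charFn 0 3 x + charFn (p + m1) p x + charFn (q + m2) q x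

/-- Isomorphism of quivers with relations. -/
def IsoQR (Q Q' : QuivRel) : Prop :=
  ∃ fV fA : ℕ → ℕ,
    Set.BijOn fV ↑Q.V ↑Q'.V ∧ Set.BijOn fA ↑Q.A ↑Q'.A ∧
    (∀ a ∈ Q.A, Q'.src (fA a) = fV (Q.src a) ∧ Q'.tgt (fA a) = fV (Q.tgt a)) ∧
    (∀ a ∈ Q.A, ∀ b ∈ Q.A, ((a, b) ∈ Q.rel ↔ (fA a, fA b) ∈ Q'.rel))

/-- The quiver has no loops. -/
def NoLoops (Q : QuivRel) : Prop := ∀ a ∈ Q.A, Q.src a ≠ Q.tgt a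

/-- The reflection at `x` is defined: every arrow starting at `x` admits a
(necessarily unique) companion arrow ending at `x` not bound by a relation. -/
def CanReflect (Q : QuivRel) (x : ℕ) : Prop :=
  x ∈ Q.V ∧ ∀ a ∈ Q.A, Q.src a = x → ∃ b ∈ Q.A, Q.tgt b = x ∧ (a, b) ∉ Q.rel

/-- `Q'` is the reflection of the gentle loop-free quiver `Q` at the vertex
`x`, following Brenner–Butler tilting. -/
def IsReflection (Q : QuivRel) (x : ℕ) (Q' : QuivRel) : Prop :=
  IsGentle Q ∧ NoLoops Q ∧ CanReflect Q x ∧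
  Q'.V = Q.V ∧ Q'.A = Q.A ∧
  (∀ a ∈ Q.A, Q.tgt a = x → Q'.src a = x ∧ Q'.tgt a = Q.src a) ∧
  (∀ a ∈ Q.A, Q.src a = x →
    ∀ b ∈ Q.A, Q.tgt b = x → (a, b) ∉ Q.rel → Q'.src a = Q.src b) ∧
  (∀ a ∈ Q.A, Q.tgt a ≠ x → Q.src a ≠ x → Q'.src a = Q.src a) ∧
  (∀ a ∈ Q.A, Q.tgt a ≠ x →
    ((∃ b ∈ Q.A, Q.tgt b = x ∧ Q.src b = Q.tgt a ∧ (b, a) ∈ Q.rel) → Q'.tgt a = x) ∧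
    ((¬ ∃ b ∈ Q.A, Q.tgt b = x ∧ Q.src b = Q.tgt a ∧ (b, a) ∈ Q.rel) →
      Q'.tgt a = Q.tgt a)) ∧
  (∀ a b : ℕ, (a, b) ∈ Q'.rel ↔
    (((a, b) ∈ Q.rel ∧ Q.tgt a ≠ x ∧ Q.src a ≠ x) ∨
     (a ∈ Q.A ∧ b ∈ Q.A ∧ Q.src a = x ∧ Q.tgt b = x ∧ (a, b) ∉ Q.rel) ∨
     (a ∈ Q.A ∧ b ∈ Q.A ∧ Q.tgt a = x ∧
       ∃ c ∈ Q.A, c ≠ a ∧ Q.tgt c = x ∧ Q.src c = Q.tgt b ∧ (c, b) ∈ Q.rel)))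

/-- The opposite quiver with relations. -/
def opQR (Q : QuivRel) : QuivRel where
  V := Q.V
  A := Q.A
  src := Q.tgt
  tgt := Q.src
  rel := Q.rel.image fun ρ => (ρ.2, ρ.1)

/-- Coreflection: the dual of reflection. -/
def IsCoreflection (Q : QuivRel) (x : ℕ) (Q' : QuivRel) : Prop :=
  IsReflection (opQR Q) x (opQR Q')

/-- One step of reflection equivalence: a reflection, a coreflection, or an
isomorphism of quivers with relations. -/
def RefStep (Q Q' : QuivRel) : Prop :=
  (∃ x, IsReflection Q x Q') ∨ (∃ x, IsCoreflection Q x Q') ∨ IsoQR Q Q'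

/-- Reflection equivalence: a finite sequence of reflections/coreflections,
up to isomorphism of quivers with relations. -/
def RefEquiv : QuivRel → QuivRel → Prop := Relation.ReflTransGen RefStep

/-- A cyclic orientation of a `1`-cycle quiver without branch arrows (i.e. a
cycle): enumerations of the vertices and arrows by `ZMod n` such that the
`i`-th arrow joins the `i`-th and `(i+1)`-st vertices. -/
structure CyclicOrientation (Q : QuivRel) (n : ℕ) where
  ev : ZMod n → ℕ
  ea : ZMod n → ℕ
  ev_mem : ∀ i, ev i ∈ Q.V
  ea_mem : ∀ i, ea i ∈ Q.A
  ev_inj : Function.Injective ev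
  ea_inj : Function.Injective ea
  ev_surj : ∀ v ∈ Q.V, ∃ i, ev i = v
  ea_surj : ∀ a ∈ Q.A, ∃ i, ea i = a
  compat : ∀ i : ZMod n,
    (Q.src (ea i) = ev i ∧ Q.tgt (ea i) = ev (i + 1)) ∨
    (Q.src (ea i) = ev (i + 1) ∧ Q.tgt (ea i) = ev i)

/-- Clockwise arrow with respect to a cyclic orientation. -/
def Clockwise (Q : QuivRel) {n : ℕ} (co : CyclicOrientation Q n) (a : ℕ) : Prop :=
  a ∈ Q.A ∧ ∃ i : ZMod n, co.ea i = a ∧ Q.src a = co.ev i ∧ Q.tgt a = co.ev (i + 1)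

/-- Anticlockwise arrow with respect to a cyclic orientation. -/
def Anticlockwise (Q : QuivRel) {n : ℕ} (co : CyclicOrientation Q n) (a : ℕ) : Prop :=
  a ∈ Q.A ∧ ∃ i : ZMod n, co.ea i = a ∧ Q.src a = co.ev (i + 1) ∧ Q.tgt a = co.ev i

end GentleQuiv

namespace GentleQuiv


theorem pm_ne_neg {e f : ℤ} (h : e = 1 ∨ e = -1) (h1 : e = -f) (h2 : e = f) : False := by
  rcases h with h | h <;> omega

theorem rel_out {Q : QuivRel} (st : SigmaTau Q) (hG : IsGentle Q) {a b : ℕ}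
    (h : (a, b) ∈ Q.rel) :
    a ∈ Q.A ∧ b ∈ Q.A ∧ Q.src a = Q.tgt b ∧ st.σ a = st.τ b := by
  obtain ⟨_, _, _, h4, _⟩ := hG
  obtain ⟨h1, h2, h3⟩ := h4 _ h
  exact ⟨h1, h2, h3, (st.rel_iff a h1 b h2 h3).1 h⟩

theorem rel_right {Q : QuivRel} (st : SigmaTau Q) (hG : IsGentle Q) {a b b' : ℕ}
    (h : (a, b) ∈ Q.rel) (h' : (a, b') ∈ Q.rel) : b = b' := by
  obtain ⟨_, hb, h1, h2⟩ := rel_out st hG h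
  obtain ⟨_, hb', h1', h2'⟩ := rel_out st hG h'
  by_contra hne
  exact pm_ne_neg (st.τ_pm b hb) (st.τ_tgt b hb b' hb' hne (by omega)) (by omega)

theorem rel_left {Q : QuivRel} (st : SigmaTau Q) (hG : IsGentle Q) {a a' b : ℕ}
    (h : (a, b) ∈ Q.rel) (h' : (a', b) ∈ Q.rel) : a = a' := by
  obtain ⟨ha, _, h1, h2⟩ := rel_out st hG h
  obtain ⟨ha', _, h1', h2'⟩ := rel_out st hG h'
  by_contra hne
  exact pm_ne_neg (st.σ_pm a ha) (st.σ_src a ha a' ha' hne (by omega)) (by omega)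

theorem getLast!_cc (a b : ℕ) (t : List ℕ) : (a :: b :: t).getLast! = (b :: t).getLast! := by
  simp [List.getLast!]

theorem getLast!_mem' (a : ℕ) (t : List ℕ) : (a :: t).getLast! ∈ a :: t := by
  simp [List.getLast!]

theorem anti_det {Q : QuivRel} (st : SigmaTau Q) (hG : IsGentle Q) (t : List ℕ) :
    ∀ (t' : List ℕ) (x : ℕ),
    (x :: t).IsChain (fun a b => (a, b) ∈ Q.rel) →
    (x :: t').IsChain (fun a b => (a, b) ∈ Q.rel) →
    (∀ b, ((x :: t).getLast!, b) ∉ Q.rel) →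
    (∀ b, ((x :: t').getLast!, b) ∉ Q.rel) → t = t' := by
  induction t with
  | nil =>
    intro t' x h1 h2 h3 h4
    cases t' with
    | nil => rfl
    | cons y t' =>
      rw [List.isChain_cons_cons] at h2
      exact absurd h2.1 (h3 y)
  | cons z t ih =>
    intro t' x h1 h2 h3 h4
    cases t' with
    | nil =>
      rw [List.isChain_cons_cons] at h1
      exact absurd h1.1 (h4 z)
    | cons y t' =>
      rw [List.isChain_cons_cons] at h1 h2
      obtain rfl := rel_right st hG h1.1 h2.1
      rw [getLast!_cc] at h3 h4
      rw [ih t' z h1.2 h2.2 h3 h4]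

theorem InN_arrows {Q : QuivRel} {st : SigmaTau Q} (hG : IsGentle Q) {l : List ℕ}
    (h : InN Q st (.arrows l)) :
    ∃ x t, l = x :: t ∧ (∀ a ∈ l, a ∈ Q.A) ∧ l.IsChain (fun a b => (a, b) ∈ Q.rel) ∧
      (∀ b, (l.getLast!, b) ∉ Q.rel) ∧ (∀ a, (a, x) ∉ Q.rel) := by
  obtain ⟨⟨h1, h2, h3⟩, h4, h5⟩ := h
  cases l with
  | nil => exact absurd rfl h1
  | cons x t =>
    refine ⟨x, t, rfl, h2, h3, ?_, ?_⟩
    · intro b hb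
      obtain ⟨_, p2, p3, p4⟩ := rel_out st hG hb
      exact h5 ⟨b, p2, p3.symm, p4.symm⟩
    · intro a ha
      obtain ⟨p1, p2, p3, p4⟩ := rel_out st hG ha
      exact h4 ⟨a, p1, p3, p4⟩

/-- The end of an antipath. -/
def endOf {Q : QuivRel} (st : SigmaTau Q) (w : Thread) : ℕ × ℤ := (w.target Q, w.tauAnti st)

theorem endOf_inj {Q : QuivRel} (st : SigmaTau Q) (hG : IsGentle Q) :
    Set.InjOn (endOf st) {w | InN Q st w} := by
  intro w hw w' hw' h
  simp only [endOf, Prod.mk.injEq] at h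
  obtain ⟨h1, h2⟩ := h
  cases w with
  | triv x e =>
    cases w' with
    | triv x' e' => simp only [Thread.target, Thread.tauAnti] at h1 h2; rw [h1, h2]
    | arrows l =>
      exfalso
      obtain ⟨y, t, rfl, hA, _⟩ := InN_arrows hG hw'
      exact hw.2.2 ⟨y, hA y (by simp), h1.symm, h2.symm⟩
  | arrows l =>
    obtain ⟨y, t, rfl, hA, hc, hl, _⟩ := InN_arrows hG hw
    cases w' with
    | triv x' e' =>
      exact absurd ⟨y, hA y (by simp), h1, h2⟩ hw'.2.2
    | arrows l' =>
      obtain ⟨y', t', rfl, hA', hc', hl', _⟩ := InN_arrows hG hw'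
      have hy := hA y (by simp)
      have hy' := hA' y' (by simp)
      have : y = y' := by
        by_contra hne
        exact pm_ne_neg (st.τ_pm y hy) (st.τ_tgt y hy y' hy' hne h1) h2
      subst this
      rw [anti_det st hG t t' y hc hc' hl hl']

/-- The set of possible ends. -/
def ends {Q : QuivRel} (st : SigmaTau Q) : Finset (ℕ × ℤ) :=
  (Q.V ×ˢ {1, -1}) \ (Q.A.image fun a => (Q.src a, st.σ a))

theorem ends_card {Q : QuivRel} (st : SigmaTau Q) (hG : IsGentle Q) :
    (ends st).card + Q.A.card = 2 * Q.V.card := by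
  have hsub : (Q.A.image fun a => (Q.src a, st.σ a)) ⊆ Q.V ×ˢ ({1, -1} : Finset ℤ) := by
    intro p hp
    obtain ⟨a, ha, rfl⟩ := Finset.mem_image.1 hp
    have := st.σ_pm a ha
    have := (hG.2.1 a ha).1
    simp_all
  have hcard : (Q.A.image fun a => (Q.src a, st.σ a)).card = Q.A.card := by
    apply Finset.card_image_of_injOn
    intro a ha b hb h
    simp only [Prod.mk.injEq] at h
    by_contra hne
    exact pm_ne_neg (st.σ_pm a ha) (st.σ_src a ha b hb hne h.1) h.2
  have := Finset.card_sdiff_add_card_eq_card hsub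
  rw [hcard] at this
  rw [ends, this, Finset.card_product]
  rw [show ({1, -1} : Finset ℤ).card = 2 from rfl]
  ring

theorem endOf_mem {Q : QuivRel} (st : SigmaTau Q) (hG : IsGentle Q) (w : Thread)
    (hw : InN Q st w) : endOf st w ∈ (ends st : Set (ℕ × ℤ)) := by
  have key : w.target Q ∈ Q.V ∧ (w.tauAnti st = 1 ∨ w.tauAnti st = -1) := by
    cases w with
    | triv x e => exact hw.1
    | arrows l =>
      obtain ⟨y, t, rfl, hA, _⟩ := InN_arrows hG hw
      have hy := hA y (by simp)
      exact ⟨(hG.2.1 y hy).2, st.τ_pm y hy⟩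
  have h2 := hw.2.1
  simp only [ends, endOf, Finset.coe_sdiff, Set.mem_diff, Finset.mem_coe, Finset.mem_product,
    Finset.mem_insert, Finset.mem_singleton, Finset.mem_image, Prod.mk.injEq]
  exact ⟨key, h2⟩

theorem N_finite {Q : QuivRel} (st : SigmaTau Q) (hG : IsGentle Q) :
    {w | InN Q st w}.Finite :=
  Set.Finite.of_injOn (fun w hw => endOf_mem st hG w hw) (endOf_inj st hG)
    (Finset.finite_toSet _)

theorem N_card {Q : QuivRel} (st : SigmaTau Q) (hG : IsGentle Q) :
    {w | InN Q st w}.ncard + Q.A.card ≤ 2 * Q.V.card := by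
  rw [← ends_card st hG]
  have : {w | InN Q st w}.ncard ≤ _ := Set.ncard_le_ncard_of_injOn (endOf st) (fun w hw => endOf_mem st hG w hw)
    (endOf_inj st hG) (Finset.finite_toSet (ends st))
  rw [Set.ncard_coe_finset] at this
  omega

theorem anti_nodup {Q : QuivRel} (st : SigmaTau Q) (hG : IsGentle Q) (l : List ℕ) :
    l.IsChain (fun a b => (a, b) ∈ Q.rel) → (∀ b, (l.getLast!, b) ∉ Q.rel) → l.Nodup := by
  induction l with
  | nil => simp
  | cons x t ih =>
    intro hc hl
    cases t with
    | nil => simp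
    | cons y t =>
      rw [List.nodup_cons]
      have hc' := hc
      rw [List.isChain_cons_cons] at hc'
      have hl' := hl
      rw [getLast!_cc] at hl'
      refine ⟨fun hx => ?_, ih hc'.2 hl'⟩
      obtain ⟨u, v, huv⟩ := List.append_of_mem hx
      have hcv : (x :: v).IsChain (fun a b => (a, b) ∈ Q.rel) := by
        have := hc'.2
        rw [huv] at this
        exact this.right_of_append
      have hlv : (y :: t).getLast! = (x :: v).getLast! := by
        rw [huv]
        simp [List.getLast!_eq_getLast?_getD, List.getLast?_cons]
      have := anti_det st hG (y :: t) v x hc hcv hl (by rw [← hlv]; exact hl')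
      have h1 := congrArg List.length this
      have h2 := congrArg List.length huv
      simp at h1 h2
      omega

theorem C_next_exists {Q : QuivRel} (st : SigmaTau Q) (hG : IsGentle Q) {a : ℕ}
    (ha : InC Q st a) : ∃ b, (a, b) ∈ Q.rel := by
  by_contra hno
  push Not at hno
  apply ha.2
  let P : ℕ → Prop := fun n => ∃ l : List ℕ, l.length = n ∧ l ≠ [] ∧ (∀ c ∈ l, c ∈ Q.A) ∧
    l.IsChain (fun a b => (a, b) ∈ Q.rel) ∧ l.getLast! = a
  have hbd : ∀ n, P n → n ≤ Q.A.card := by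
    rintro n ⟨l, rfl, _, hA, hc, hl⟩
    have hnd := anti_nodup st hG l hc (by rw [hl]; exact hno)
    rw [← List.toFinset_card_of_nodup hnd]
    exact Finset.card_le_card (fun c hc => hA c (by simpa using hc))
  have hP1 : P 1 := ⟨[a], by simp, by simp, by simpa using ha.1, by simp, by simp [List.getLast!]⟩
  classical
  have hspec := Nat.findGreatest_spec (P := P) (hbd 1 hP1) hP1
  obtain ⟨l, hlen, hne, hA, hc, hl⟩ := hspec
  cases l with
  | nil => exact absurd rfl hne
  | cons x t =>
    refine ⟨x :: t, ⟨⟨hne, hA, hc⟩, ?_, ?_⟩, ?_⟩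
    · rintro ⟨c, hcA, h1, h2⟩
      have hcx : (c, x) ∈ Q.rel := (st.rel_iff c hcA x (hA x (by simp)) h1).2 h2
      have hP : P (t.length + 2) := by
        refine ⟨c :: x :: t, by simp, by simp, ?_, ?_, ?_⟩
        · intro d hd
          rcases List.mem_cons.1 hd with rfl | hd
          · exact hcA
          · exact hA d hd
        · rw [List.isChain_cons_cons]; exact ⟨hcx, hc⟩
        · rw [getLast!_cc, hl]
      have := Nat.le_findGreatest (hbd _ hP) hP
      simp at hlen
      omega
    · rintro ⟨b, hb, h1, h2⟩
      simp only [Thread.source, Thread.sigma, hl] at h1 h2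
      exact hno b ((st.rel_iff a ha.1 b hb h1.symm).2 h2.symm)
    · rw [← hl]; exact getLast!_mem' x t

theorem chain_pred (R : ℕ → ℕ → Prop) (l : List ℕ) : ∀ x, (x :: l).IsChain R → ∀ b ∈ l,
    ∃ a ∈ x :: l, R a b := by
  induction l with
  | nil => simp
  | cons y l ih =>
    intro x h b hb
    rw [List.isChain_cons_cons] at h
    rcases List.mem_cons.1 hb with rfl | hb
    · exact ⟨x, by simp, h.1⟩
    · obtain ⟨a, ha, hr⟩ := ih y h.2 b hb
      exact ⟨a, List.mem_cons_of_mem _ ha, hr⟩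

theorem C_next_mem {Q : QuivRel} (st : SigmaTau Q) (hG : IsGentle Q) {a b : ℕ}
    (ha : InC Q st a) (hab : (a, b) ∈ Q.rel) : InC Q st b := by
  refine ⟨(rel_out st hG hab).2.1, ?_⟩
  rintro ⟨l, hl, hb⟩
  obtain ⟨x, t, rfl, hA, hc, _, hx⟩ := InN_arrows hG hl
  rcases List.mem_cons.1 hb with rfl | hb
  · exact hx a hab
  · obtain ⟨a', ha', hr⟩ := chain_pred _ t x hc b hb
    obtain rfl := rel_left st hG hab hr
    exact ha.2 ⟨_, hl, ha'⟩

theorem psiRel_iff {Q : QuivRel} (st : SigmaTau Q) (hG : IsGentle Q) {a b : ℕ} :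
    PsiRel Q st a b ↔ InC Q st a ∧ (a, b) ∈ Q.rel := by
  constructor
  · rintro ⟨h1, h2, h3, h4⟩
    exact ⟨h1, (st.rel_iff a h1.1 b h2.1 h3.symm).2 h4.symm⟩
  · rintro ⟨h1, h2⟩
    obtain ⟨p1, p2, p3, p4⟩ := rel_out st hG h2
    exact ⟨h1, C_next_mem st hG h1 h2, p3.symm, p4.symm⟩

theorem eqvGen_C {Q : QuivRel} {st : SigmaTau Q} {a b : ℕ}
    (h : Relation.EqvGen (PsiRel Q st) a b) : InC Q st a ↔ InC Q st b := by
  induction h with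
  | rel x y h => exact ⟨fun _ => h.2.1, fun _ => h.1⟩
  | refl x => rfl
  | symm x y _ ih => exact ih.symm
  | trans x y z _ _ h1 h2 => exact h1.trans h2

theorem eqvGen_N {Q : QuivRel} {st : SigmaTau Q} {a b : Thread}
    (h : Relation.EqvGen (PhiRel Q st) a b) : InN Q st a ↔ InN Q st b := by
  induction h with
  | rel x y h => exact ⟨fun _ => h.2.1, fun _ => h.1⟩
  | refl x => rfl
  | symm x y _ ih => exact ih.symm
  | trans x y z _ _ h1 h2 => exact h1.trans h2

theorem NOrbit_sub {Q : QuivRel} {st : SigmaTau Q} {O : Set Thread} (h : NOrbit Q st O) :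
    O ⊆ {w | InN Q st w} := by
  obtain ⟨w, hw, rfl⟩ := h
  intro w' hw'
  exact (eqvGen_N hw').1 hw

theorem COrbit_sub {Q : QuivRel} {st : SigmaTau Q} {O : Set ℕ} (h : COrbit Q st O) :
    ∀ a ∈ O, InC Q st a := by
  obtain ⟨w, hw, rfl⟩ := h
  intro w' hw'
  exact (eqvGen_C hw').1 hw

theorem COrbit_subA {Q : QuivRel} {st : SigmaTau Q} {O : Set ℕ} (h : COrbit Q st O) :
    O ⊆ (Q.A : Set ℕ) := fun a ha => (COrbit_sub h a ha).1

theorem COrbit_finite {Q : QuivRel} {st : SigmaTau Q} {O : Set ℕ} (h : COrbit Q st O) :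
    O.Finite := (Finset.finite_toSet Q.A).subset (COrbit_subA h)

theorem COrbits_finite (Q : QuivRel) (st : SigmaTau Q) : {O | COrbit Q st O}.Finite :=
  (Finset.finite_toSet Q.A).finite_subsets.subset (fun _ h => COrbit_subA h)

theorem NOrbits_finite {Q : QuivRel} (st : SigmaTau Q) (hG : IsGentle Q) :
    {O | NOrbit Q st O}.Finite :=
  (N_finite st hG).finite_subsets.subset (fun _ h => NOrbit_sub h)

theorem COrbit_eq {Q : QuivRel} {st : SigmaTau Q} {O O' : Set ℕ} (h : COrbit Q st O)
    (h' : COrbit Q st O') {a : ℕ} (ha : a ∈ O) (ha' : a ∈ O') : O = O' := by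
  obtain ⟨w, hw, rfl⟩ := h
  obtain ⟨w', hw', rfl⟩ := h'
  have e : Relation.EqvGen (PsiRel Q st) w w' :=
    Relation.EqvGen.trans _ _ _ ha (Relation.EqvGen.symm _ _ ha')
  ext b
  exact ⟨fun hb => Relation.EqvGen.trans _ _ _ (Relation.EqvGen.symm _ _ e) hb,
    fun hb => Relation.EqvGen.trans _ _ _ e hb⟩

theorem NOrbit_eq {Q : QuivRel} {st : SigmaTau Q} {O : Set Thread} (h : NOrbit Q st O)
    (hu : ∀ O', NOrbit Q st O' → O' = O) : O = {w | InN Q st w} := by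
  apply Set.Subset.antisymm (NOrbit_sub h)
  intro w hw
  have := hu _ ⟨w, hw, rfl⟩
  rw [← this]
  exact Relation.EqvGen.refl w

theorem pN_pos {Q : QuivRel} (st : SigmaTau Q) (hG : IsGentle Q) {O : Set Thread}
    (h : NOrbit Q st O) : 0 < pN O := by
  have hf := (N_finite st hG).subset (NOrbit_sub h)
  obtain ⟨w, hw, rfl⟩ := h
  rw [pN, Set.ncard_pos hf]
  exact ⟨w, Relation.EqvGen.refl w⟩

/-- Everything extracted from membership in the class. -/
theorem classA_extract {Q : QuivRel} (st : SigmaTau Q) (hA : ClassA Q st) :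
    ∃ m p : ℕ, {O | COrbit Q st O}.ncard = m ∧ (∀ O, COrbit Q st O → O.ncard = 3) ∧
      {w | InN Q st w}.ncard = p + m + 2 ∧ qN {w | InN Q st w} = p := by
  obtain ⟨hG, m, p, hf⟩ := hA
  have hC3 : ∀ O, COrbit Q st O → O.ncard = 3 := by
    intro O hO
    have h1 := hf (0, O.ncard)
    have h2 : 0 < {O' : Set ℕ | COrbit Q st O' ∧ (0, O.ncard).1 = 0 ∧
        O'.ncard = (0, O.ncard).2}.ncard := by
      rw [Set.ncard_pos ((COrbits_finite Q st).subset (fun _ h => h.1))]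
      exact ⟨O, hO, rfl, rfl⟩
    by_contra hne
    simp only [fInv, charFn, Prod.mk.injEq] at h1 h2
    simp [hne] at h1
    have h3 := h1.2
    simp only [true_and] at h2
    rw [h3] at h2
    omega
  have hN : ∀ O, NOrbit Q st O → pN O = p + m + 2 ∧ qN O = p := by
    intro O hO
    have h1 := hf (pN O, qN O)
    have h0 := pN_pos st hG hO
    have h2 : 0 < {O' : Set Thread | NOrbit Q st O' ∧ pN O' = (pN O, qN O).1 ∧
        qN O' = (pN O, qN O).2}.ncard := by
      rw [Set.ncard_pos ((NOrbits_finite st hG).subset (fun _ h => h.1))]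
      exact ⟨O, hO, rfl, rfl⟩
    by_contra hne
    simp only [fInv, charFn, Prod.mk.injEq] at h1 h2
    rw [if_neg hne, if_neg (by omega)] at h1
    omega
  refine ⟨m, p, ?_, hC3, ?_⟩
  · have h1 := hf (0, 3)
    have e1 : {O : Set Thread | NOrbit Q st O ∧ pN O = (0, 3).1 ∧ qN O = (0, 3).2} = ∅ := by
      ext O
      simp only [Set.mem_setOf_eq, Set.mem_empty_iff_false, iff_false]
      rintro ⟨h, h', _⟩
      have := pN_pos st hG h
      omega
    have e2 : {O : Set ℕ | COrbit Q st O ∧ (0, 3).1 = 0 ∧ O.ncard = (0, 3).2}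
        = {O | COrbit Q st O} := by
      ext O
      exact ⟨fun h => h.1, fun h => ⟨h, rfl, hC3 O h⟩⟩
    rw [fInv, e1, e2] at h1
    simpa [charFn] using h1
  · have h1 := hf (p + m + 2, p)
    have e1 : {O : Set Thread | NOrbit Q st O ∧ pN O = (p + m + 2, p).1 ∧
        qN O = (p + m + 2, p).2} = {O | NOrbit Q st O} := by
      ext O
      exact ⟨fun h => h.1, fun h => ⟨h, hN O h⟩⟩
    have e2 : {O : Set ℕ | COrbit Q st O ∧ (p + m + 2, p).1 = 0 ∧ O.ncard = (p + m + 2, p).2}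
        = ∅ := by
      ext O
      simp
    rw [fInv, e1, e2] at h1
    simp [charFn] at h1
    obtain ⟨O, hO⟩ := h1
    have hO1 : NOrbit Q st O := by
      have : O ∈ {O | NOrbit Q st O} := by rw [hO]; rfl
      exact this
    have := NOrbit_eq hO1 (fun O' h' => by
      have : O' ∈ {O | NOrbit Q st O} := h'
      rw [hO] at this; exact this)
    rw [← this]
    exact hN O hO1

theorem A_card_le {Q : QuivRel} (st : SigmaTau Q) (hG : IsGentle Q)
    (h3 : ∀ O, COrbit Q st O → O.ncard = 3) :
    Q.A.card ≤ 3 * {O | COrbit Q st O}.ncard + qN {w | InN Q st w} := by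
  classical
  have hfC := COrbits_finite Q st
  have hfN := N_finite st hG
  let arr : Thread → Finset ℕ := fun w => match w with
    | .triv _ _ => ∅
    | .arrows l => l.toFinset
  have harr : ∀ w, (arr w).card ≤ w.len := by
    intro w
    cases w with
    | triv x e => simp [arr, Thread.len]
    | arrows l => exact List.toFinset_card_le l
  have hcov : Q.A ⊆ (hfC.toFinset.biUnion (fun O => Q.A.filter (· ∈ O))) ∪
      hfN.toFinset.biUnion arr := by
    intro a ha
    rw [Finset.mem_union, Finset.mem_biUnion, Finset.mem_biUnion]
    by_cases hc : InC Q st a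
    · left
      refine ⟨{b | Relation.EqvGen (PsiRel Q st) a b}, ?_, ?_⟩
      · simp only [Set.Finite.mem_toFinset]; exact ⟨a, hc, rfl⟩
      · simp only [Finset.mem_filter]; exact ⟨ha, Relation.EqvGen.refl a⟩
    · right
      have : ∃ l : List ℕ, InN Q st (.arrows l) ∧ a ∈ l := by
        by_contra h
        exact hc ⟨ha, h⟩
      obtain ⟨l, hl, hal⟩ := this
      exact ⟨.arrows l, by simpa using hl, by simpa [arr] using hal⟩
  refine (Finset.card_le_card hcov).trans ((Finset.card_union_le _ _).trans ?_)
  apply Nat.add_le_add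
  · rw [Set.ncard_eq_toFinset_card _ hfC, mul_comm]
    apply Finset.card_biUnion_le_card_mul
    intro O hO
    have hO' : COrbit Q st O := by simpa using hO
    rw [← h3 O hO', ← Set.ncard_coe_finset]
    apply Set.ncard_le_ncard _ (COrbit_finite hO')
    intro a ha
    simp at ha
    exact ha.2
  · refine Finset.card_biUnion_le.trans ?_
    rw [qN, finsum_mem_eq_finite_toFinset_sum _ hfN]
    exact Finset.sum_le_sum (fun w _ => harr w)

/-- The incidence matrix. -/
def inc (Q : QuivRel) : Matrix Q.V Q.A ℚ := fun v a =>
  (if Q.tgt a = v then 1 else 0) - (if Q.src a = v then 1 else 0)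

theorem inc_ker_card (Q : QuivRel) (hG : IsGentle Q) :
    Module.finrank ℚ (LinearMap.ker (inc Q).mulVecLin) + Q.V.card ≤ Q.A.card + 1 := by
  have h1 := LinearMap.finrank_range_add_finrank_ker (inc Q).mulVecLin
  have h2 := LinearMap.finrank_range_add_finrank_ker (inc Q).transpose.mulVecLin
  have h3 := Matrix.rank_transpose (inc Q)
  unfold Matrix.rank at h3
  have h4 : LinearMap.ker (inc Q).transpose.mulVecLin ≤ Submodule.span ℚ {fun _ => 1} := by
    intro f hf
    have hf' : ∀ (a : ℕ) (ha : a ∈ Q.A), f ⟨Q.tgt a, (hG.2.1 a ha).2⟩ =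
        f ⟨Q.src a, (hG.2.1 a ha).1⟩ := by
      intro a ha
      have := congrFun (LinearMap.mem_ker.1 hf) ⟨a, ha⟩
      simp only [Matrix.mulVecLin_apply, Matrix.mulVec, dotProduct, Matrix.transpose_apply, inc,
        sub_mul, ite_mul, one_mul, zero_mul, Finset.sum_sub_distrib, Pi.zero_apply] at this
      rw [Finset.sum_eq_single (⟨Q.tgt a, (hG.2.1 a ha).2⟩ : Q.V),
        Finset.sum_eq_single (⟨Q.src a, (hG.2.1 a ha).1⟩ : Q.V)] at this
      · simp at this; linarith
      · intro b _ hb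
        rw [if_neg]
        intro h; exact hb (Subtype.ext h.symm)
      · simp
      · intro b _ hb
        rw [if_neg]
        intro h; exact hb (Subtype.ext h.symm)
      · simp
    obtain ⟨v0, hv0⟩ := hG.1
    have hall : ∀ y, Relation.ReflTransGen (Adj Q) v0 y →
        ∃ hy : y ∈ Q.V, f ⟨y, hy⟩ = f ⟨v0, hv0⟩ := by
      intro y h
      induction h with
      | refl => exact ⟨hv0, rfl⟩
      | tail _ hadj ih =>
        obtain ⟨hb, ih⟩ := ih
        obtain ⟨a, ha, ⟨rfl, rfl⟩ | ⟨rfl, rfl⟩⟩ := hadj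
        · exact ⟨(hG.2.1 a ha).2, by rw [hf' a ha, ih]⟩
        · exact ⟨(hG.2.1 a ha).1, by rw [← hf' a ha, ih]⟩
    rw [Submodule.mem_span_singleton]
    refine ⟨f ⟨v0, hv0⟩, ?_⟩
    ext ⟨y, hy⟩
    obtain ⟨_, h⟩ := hall y (hG.2.2.1 v0 hv0 y hy)
    simp [h]
  have h5 := (Submodule.finrank_mono h4).trans (finrank_span_le_card _)
  simp only [Set.toFinset_singleton, Finset.card_singleton] at h5
  simp only [Module.finrank_fintype_fun_eq_card, Fintype.card_coe] at h1 h2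
  omega

theorem mem_inc_ker {Q : QuivRel} (S : Finset ℕ) (hS : S ⊆ Q.A) (f : ℕ → ℕ)
    (hf : Set.BijOn f S S) (hst : ∀ a ∈ S, Q.src a = Q.tgt (f a)) :
    (fun a : Q.A => if (a : ℕ) ∈ S then (1 : ℚ) else 0) ∈
      LinearMap.ker (inc Q).mulVecLin := by
  rw [LinearMap.mem_ker]
  ext v
  simp only [Matrix.mulVecLin_apply, Matrix.mulVec, dotProduct, inc, Pi.zero_apply, mul_ite,
    mul_one, mul_zero]
  have e1 := Finset.sum_coe_sort Q.A (fun a => if a ∈ S then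
    ((if Q.tgt a = v then (1 : ℚ) else 0) - (if Q.src a = v then 1 else 0)) else 0)
  rw [e1, ← Finset.sum_filter, Finset.filter_mem_eq_inter, Finset.inter_eq_right.2 hS,
    Finset.sum_sub_distrib, sub_eq_zero]
  symm
  apply Finset.sum_bij (fun a _ => f a)
  · exact fun a ha => hf.mapsTo ha
  · exact fun a ha b hb h => hf.injOn ha hb h
  · intro b hb
    obtain ⟨a, ha, h⟩ := hf.surjOn hb
    exact ⟨a, ha, h⟩
  · intro a ha
    rw [hst a ha]

theorem COrbit_psi {Q : QuivRel} (st : SigmaTau Q) (hG : IsGentle Q) {O : Set ℕ}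
    (hO : COrbit Q st O) : ∃ f : ℕ → ℕ, Set.BijOn f O O ∧ ∀ a ∈ O, (a, f a) ∈ Q.rel := by
  have hex : ∀ a, ∃ b, a ∈ O → (a, b) ∈ Q.rel := by
    intro a
    by_cases ha : a ∈ O
    · obtain ⟨b, hb⟩ := C_next_exists st hG (COrbit_sub hO a ha)
      exact ⟨b, fun _ => hb⟩
    · exact ⟨0, fun h => absurd h ha⟩
  choose f hf using hex
  have hmaps : Set.MapsTo f O O := by
    intro a ha
    have h1 := (psiRel_iff st hG).2 ⟨COrbit_sub hO a ha, hf a ha⟩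
    obtain ⟨w, hw, rfl⟩ := hO
    exact Relation.EqvGen.trans _ _ _ ha (Relation.EqvGen.rel _ _ h1)
  have hinj : Set.InjOn f O := by
    intro a ha b hb h
    have h1 := hf a ha
    rw [h] at h1
    exact rel_left st hG h1 (hf b hb)
  refine ⟨f, ⟨hmaps, hinj, ?_⟩, hf⟩
  have himg : f '' O = O := Set.eq_of_subset_of_ncard_le hmaps.image_subset
    (by rw [Set.ncard_image_of_injOn hinj]) (COrbit_finite hO)
  intro b hb
  rw [himg]
  exact hb

theorem key {Q : QuivRel} (st : SigmaTau Q) (hA : ClassA Q st) (z : Q.A → ℚ)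
    (hz : z ∈ LinearMap.ker (inc Q).mulVecLin) (a : Q.A) (ha : z a ≠ 0) :
    ∃ O, COrbit Q st O ∧ (a : ℕ) ∈ O ∧ ∀ b : Q.A, (b : ℕ) ∈ O → z b = z a := by
  classical
  have hG := hA.1
  obtain ⟨m, p, hm, h3, hN, hq⟩ := classA_extract st hA
  have c1 := A_card_le st hG h3
  have c2 := N_card st hG
  have c3 := inc_ker_card Q hG
  rw [hm, hq] at c1
  rw [hN] at c2
  let I := {O : Set ℕ // COrbit Q st O}
  haveI : Fintype I := (COrbits_finite Q st).fintype
  have hI : Fintype.card I = m := by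
    rw [← hm, ← Nat.card_eq_fintype_card]; rfl
  have hrep : ∀ O : I, ∃ r : Q.A, (r : ℕ) ∈ O.1 := by
    intro O
    obtain ⟨w, hw, h⟩ := O.2
    exact ⟨⟨w, hw.1⟩, by rw [h]; exact Relation.EqvGen.refl w⟩
  choose r hr using hrep
  let T : I → Q.A → ℚ := fun O a => if (a : ℕ) ∈ O.1 then 1 else 0
  have hT : ∀ O, T O ∈ LinearMap.ker (inc Q).mulVecLin := by
    intro O
    obtain ⟨f, hf, hfr⟩ := COrbit_psi st hG O.2
    have hfin := COrbit_finite O.2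
    have := mem_inc_ker hfin.toFinset (fun a ha => COrbit_subA O.2 (by simpa using ha)) f
      (by simpa using hf) (fun a ha => (rel_out st hG (hfr a (by simpa using ha))).2.2.1)
    simpa [T] using this
  let K := LinearMap.ker (inc Q).mulVecLin
  let L : K →ₗ[ℚ] (I → ℚ) := LinearMap.pi (fun O => (LinearMap.proj (r O)).comp K.subtype)
  have hTr : ∀ O O', T O (r O') = if O = O' then 1 else 0 := by
    intro O O'
    by_cases h : O = O'
    · subst h; simp [T, hr]
    · have : (r O' : ℕ) ∉ O.1 := fun h' => h (Subtype.ext (COrbit_eq O.2 O'.2 h' (hr O')))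
      simp [T, h, this]
  let G : (I → ℚ) → K := fun c => ∑ O, c O • (⟨T O, hT O⟩ : K)
  have hGa : ∀ c a, (G c : Q.A → ℚ) a = ∑ O, c O * T O a := by
    intro c a
    simp [G, Finset.sum_apply]
  have hLG : ∀ c, L (G c) = c := by
    intro c
    ext O'
    show (G c : Q.A → ℚ) (r O') = c O'
    rw [hGa]
    rw [Finset.sum_eq_single O']
    · simp [hTr]
    · intro O _ hO
      simp [hTr, hO]
    · intro hO
      exact absurd (Finset.mem_univ _) hO
  have hsurj : Function.Surjective L := fun c => ⟨G c, hLG c⟩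
  have hdim : Module.finrank ℚ K = Module.finrank ℚ (I → ℚ) := by
    apply le_antisymm
    · rw [Module.finrank_fintype_fun_eq_card, hI]
      show Module.finrank ℚ (LinearMap.ker (inc Q).mulVecLin) ≤ m
      omega
    · exact LinearMap.finrank_le_finrank_of_surjective hsurj
  have hinj : Function.Injective L :=
    (LinearMap.injective_iff_surjective_of_finrank_eq_finrank hdim).2 hsurj
  let zK : K := ⟨z, hz⟩
  have hzG : zK = G (L zK) := hinj (hLG (L zK)).symm
  have hza : ∀ a, z a = ∑ O, L zK O * T O a := by
    intro a
    rw [← hGa, ← hzG]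
  have hex : ∃ O : I, (a : ℕ) ∈ O.1 := by
    by_contra h
    push Not at h
    apply ha
    rw [hza]
    apply Finset.sum_eq_zero
    intro O _
    simp [T, h O]
  obtain ⟨O, hO⟩ := hex
  refine ⟨O.1, O.2, hO, ?_⟩
  intro b hb
  rw [hza, hza]
  apply Finset.sum_congr rfl
  intro O' _
  have : (b : ℕ) ∈ O'.1 ↔ (a : ℕ) ∈ O'.1 := by
    constructor
    · intro h; rw [COrbit_eq O'.2 O.2 h hb]; exact hO
    · intro h; rw [COrbit_eq O'.2 O.2 h hO]; exact hb
  simp [T, this]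

theorem COrbit_no_fix {Q : QuivRel} (st : SigmaTau Q) (hG : IsGentle Q) {O : Set ℕ}
    (hO : COrbit Q st O) {x : ℕ} (hx : x ∈ O) (hxx : (x, x) ∈ Q.rel) : O ⊆ {x} := by
  have hcl : ∀ u v, Relation.EqvGen (PsiRel Q st) u v → (u = x ↔ v = x) := by
    intro u v h
    induction h with
    | rel u v h =>
      have h' := ((psiRel_iff st hG).1 h).2
      constructor
      · rintro rfl; exact rel_right st hG h' hxx
      · rintro rfl; exact rel_left st hG h' hxx
    | refl u => rfl
    | symm x y _ ih => exact ih.symm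
    | trans x y z _ _ h1 h2 => exact h1.trans h2
  obtain ⟨w, hw, rfl⟩ := hO
  intro y hy
  exact (hcl w y hy).1 ((hcl w x hx).2 rfl)

theorem main {Q : QuivRel} (st : SigmaTau Q) (hA : ClassA Q st) (a0 a1 a2 : ℕ)
    (h : Is3Cycle Q a0 a1 a2) :
    (a0, a1) ∈ Q.rel ∧ (a1, a2) ∈ Q.rel ∧ (a2, a0) ∈ Q.rel := by
  classical
  have hG := hA.1
  obtain ⟨m0, m1, m2, n01, n12, n02, s0, s1, s2⟩ := h
  have hSA : ({a0, a1, a2} : Finset ℕ) ⊆ Q.A := by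
    intro x hx
    simp at hx
    rcases hx with rfl | rfl | rfl <;> assumption
  let g : ℕ → ℕ := fun a => if a = a0 then a1 else if a = a1 then a2 else a0
  have g0 : g a0 = a1 := by simp [g]
  have g1 : g a1 = a2 := by simp [g, n01.symm]
  have g2 : g a2 = a0 := by simp [g, n02.symm, n12.symm]
  have hz := mem_inc_ker {a0, a1, a2} hSA g (by
    refine ⟨?_, ?_, ?_⟩
    · intro x hx
      simp at hx
      rcases hx with rfl | rfl | rfl <;> simp [g0, g1, g2]
    · intro x hx y hy hxy
      simp at hx hy
      rcases hx with rfl | rfl | rfl <;> rcases hy with rfl | rfl | rfl <;>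
        simp_all
    · intro x hx
      simp at hx
      rcases hx with rfl | rfl | rfl
      · exact ⟨a2, by simp, g2⟩
      · exact ⟨a0, by simp, g0⟩
      · exact ⟨a1, by simp, g1⟩) (by
    intro x hx
    simp at hx
    rcases hx with rfl | rfl | rfl
    · rw [g0, s0]
    · rw [g1, s1]
    · rw [g2, s2])
  obtain ⟨O, hO, ha0, hsub⟩ := key st hA _ hz ⟨a0, m0⟩ (by simp)
  obtain ⟨m, p, hm, h3, hN, hq⟩ := classA_extract st hA
  have hO3 := h3 O hO
  have hOsub : O ⊆ ({a0, a1, a2} : Finset ℕ) := by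
    intro b hb
    have := hsub ⟨b, COrbit_subA hO hb⟩ hb
    simp at this
    simp only [Finset.coe_insert, Finset.coe_singleton, Set.mem_insert_iff,
      Set.mem_singleton_iff]
    tauto
  have hOeq : O = ({a0, a1, a2} : Finset ℕ) := by
    apply Set.eq_of_subset_of_ncard_le hOsub _ (Finset.finite_toSet _)
    rw [Set.ncard_coe_finset, hO3]
    exact Finset.card_le_three
  obtain ⟨f, hf, hfr⟩ := COrbit_psi st hG hO
  have hnf : ∀ x ∈ O, f x ≠ x := by
    intro x hx hfx
    have h1 := hfr x hx
    rw [hfx] at h1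
    have h2 := Set.ncard_le_ncard (COrbit_no_fix st hG hO hx h1)
    rw [hO3, Set.ncard_singleton] at h2
    omega
  have hmem : ∀ x, x ∈ O ↔ x = a0 ∨ x = a1 ∨ x = a2 := by
    intro x; rw [hOeq]; simp
  have i0 : a0 ∈ O := (hmem _).2 (by simp)
  have i1 : a1 ∈ O := (hmem _).2 (by simp)
  have i2 : a2 ∈ O := (hmem _).2 (by simp)
  have f0 := (hmem _).1 (hf.mapsTo i0)
  have f1 := (hmem _).1 (hf.mapsTo i1)
  have f2 := (hmem _).1 (hf.mapsTo i2)
  have k01 : f a0 ≠ f a1 := fun h => n01 (hf.injOn i0 i1 h)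
  have k12 : f a1 ≠ f a2 := fun h => n12 (hf.injOn i1 i2 h)
  have k02 : f a0 ≠ f a2 := fun h => n02 (hf.injOn i0 i2 h)
  have q0 := hnf a0 i0
  have q1 := hnf a1 i1
  have q2 := hnf a2 i2
  have r0 := hfr a0 i0
  have r1 := hfr a1 i1
  have r2 := hfr a2 i2
  rcases f0 with f0 | f0 | f0
  · exact absurd f0 q0
  · have e1 : f a1 = a2 := by grind
    have e2 : f a2 = a0 := by grind
    rw [f0] at r0; rw [e1] at r1; rw [e2] at r2
    exact ⟨r0, r1, r2⟩
  · exfalso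
    have e1 : f a1 = a0 := by grind
    have e2 : f a2 = a1 := by grind
    rw [f0] at r0; rw [e1] at r1; rw [e2] at r2
    have t0 := (rel_out st hG r0).2.2.1
    have t1 := (rel_out st hG r1).2.2.1
    have t2 := (rel_out st hG r2).2.2.1
    have hcard := hG.2.2.2.2.1 (Q.src a0)
    have hs : ({a0, a1, a2} : Finset ℕ) ⊆ Q.A.filter fun a => Q.src a = Q.src a0 := by
      intro x hx
      rw [Finset.mem_filter]
      refine ⟨hSA hx, ?_⟩
      simp at hx
      rcases hx with rfl | rfl | rfl <;> omega
    have h5 := Finset.card_le_card hs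
    have h6 : ({a0, a1, a2} : Finset ℕ).card = 3 := Finset.card_eq_three.2
      ⟨a0, a1, a2, n01, n02, n12, rfl⟩
    omega

/-- Let `𝚫 ∈ 𝒜`.  Then every `3`-cycle `(α₀, α₁, α₂)` of
`Δ` satisfies `(α₀,α₁), (α₁,α₂), (α₂,α₀) ∈ R`, i.e. is a triangle of `𝚫`;
consequently triangles of `𝚫` and `3`-cycles of `Δ` (up to cyclic permutation)
coincide, the bijection being induced by `{α, Ψα, Ψ²α} ↦ (α, Ψα, Ψ²α)`. -/
theorem stmt19 (Q : QuivRel) (st : SigmaTau Q) (hA : ClassA Q st) :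
    (∀ a0 a1 a2 : ℕ, Is3Cycle Q a0 a1 a2 →
      (a0, a1) ∈ Q.rel ∧ (a1, a2) ∈ Q.rel ∧ (a2, a0) ∈ Q.rel) ∧
    {S : Finset ℕ | TriangleSet Q S} =
      {S : Finset ℕ | ∃ a0 a1 a2 : ℕ, S = {a0, a1, a2} ∧ Is3Cycle Q a0 a1 a2} := by
  refine ⟨main st hA, ?_⟩
  ext S
  constructor
  · rintro ⟨a0, a1, a2, h, h'⟩
    exact ⟨a0, a1, a2, h, h'.1⟩
  · rintro ⟨a0, a1, a2, h, h'⟩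
    exact ⟨a0, a1, a2, h, h', main st hA a0 a1 a2 h'⟩

end GentleQuiv
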